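/- Let q be an odd prime, let (G, H, T) be a faithful RCC loop folder of order 2q with ⟨T⟩ = G, and let K be a subgroup of G with H ≤ K ≤ G, |K : H| = 2 and |G : K| = q. If K is self-normalizing, i.e., N_G(K) = K, then there exists a normal subgroup M of G such that the subgroup HM has index 2 in G. -/

import Mathlib

/-- A loop folder `(G, H, T)`: `T` contains `1` and is a transversal for the right cosets
of every conjugate `H^g = g⁻¹Hg` of `H` in `G` (note `H^g x = H^g t ↔ g*(x*t⁻¹)*g⁻¹ ∈ H`). -/
def IsLoopFolder {G : Type*} [Group G] (H : Subgroup G) (T : Set G) : Prop :=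
  (1 : G) ∈ T ∧ ∀ g x : G, ∃! t, t ∈ T ∧ g * (x * t⁻¹) * g⁻¹ ∈ H

/-- The loop folder is right conjugacy closed: `T` is invariant under conjugation by `G`. -/
def IsRCC {G : Type*} [Group G] (T : Set G) : Prop :=
  ∀ t ∈ T, ∀ g : G, g⁻¹ * t * g ∈ T

/-- The loop folder is faithful: the core `⋂_{g ∈ G} g⁻¹Hg` of `H` in `G` is trivial. -/
def IsFaithfulFolder {G : Type*} [Group G] (H : Subgroup G) : Prop :=
  ∀ x : G, (∀ g : G, g * x * g⁻¹ ∈ H) → x = 1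

/-! Let `C` be the core of `K`. Squares of elements of `K` lie in `H`, so faithfulness forces `C` to
have exponent 2; for odd `q` this gives `q ∤ |K|`. The transversal meets `K` in `{1, z}` with
`z ≠ 1`, and `K` centralizes `z`, so the class of `z` has size `1` or `q`. The remaining `2 (q - 1)`
or `q - 1` elements of `T` form classes outside `K`, one of which is small enough for Sylow's
theorem: its elements `t` act on `G/K` as `q`-cycles generating a normal subgroup of the image of
`G`.

It remains to find `u ∉ C` with `u ^ q ∈ C` and `⟨u ^ 2⟩` normal, as then `M = ⟨u ^ 2⟩` has order
`q`. If `z` is not central, `u = ⁅z, t⁆` works. If `z` is central, every element of `T` acts on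
`G/K` trivially or without fixed points, hence as a power of `t`, and so `K` is normal. Then two of
`s`, `s ^ g`, `s ^ (g ^ 2)` coincide for `s ∈ T`, since each coset of `K` contains only two elements
of `T`; so every `g ^ 2` is central, and any `u ∉ K` works. -/

section Group

open Subgroup

variable {G G' : Type*} [Group G] [Group G'] {H K M : Subgroup G} {a b u : G}

theorem orderOf_eq_of_mem_zpowers_of_prime (ha : (orderOf a).Prime) (hb : b ∈ zpowers a)
    (hb1 : b ≠ 1) : orderOf b = orderOf a :=
  ((Nat.dvd_prime ha).1 (orderOf_dvd_of_mem_zpowers hb)).resolve_left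
    fun h => hb1 (orderOf_eq_one_iff.1 h)

theorem zpowers_eq_of_mem_zpowers_of_prime (ha : (orderOf a).Prime) (hb : b ∈ zpowers a)
    (hb1 : b ≠ 1) : zpowers b = zpowers a := by
  have : Finite (zpowers a) := finite_zpowers.2 (orderOf_pos_iff.1 ha.pos)
  apply eq_of_le_of_card_ge (zpowers_le.2 hb)
  rw [Nat.card_zpowers, Nat.card_zpowers, orderOf_eq_of_mem_zpowers_of_prime ha hb hb1]

theorem orderOf_sq_eq_prime_of_pow_mem {q : ℕ} (hq : q.Prime) (hq2 : q ≠ 2) {N : Subgroup G}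
    (hsq : ∀ c ∈ N, c ^ 2 = 1) (hu : u ∉ N) (huq : u ^ q ∈ N) : orderOf (u ^ 2) = q := by
  have := Fact.mk hq
  refine orderOf_eq_prime (by rw [← pow_mul, mul_comm, pow_mul, hsq _ huq]) fun hu2 => hu ?_
  obtain ⟨k, hk⟩ := hq.odd_of_ne_two hq2
  rwa [hk, pow_succ, pow_mul, hu2, one_pow, one_mul] at huq

theorem mul_mem_iff_of_relIndex_two (h : H.relIndex K = 2) {a b : G} (ha : a ∈ K) (hb : b ∈ K) :
    a * b ∈ H ↔ (a ∈ H ↔ b ∈ H) :=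
  mul_mem_iff_of_index_two (H := H.subgroupOf K) h (a := ⟨a, ha⟩) (b := ⟨b, hb⟩)

theorem index_sup_mul_card_of_coprime [Finite G] [M.Normal]
    (h : (Nat.card H).Coprime (Nat.card M)) : (H ⊔ M).index * Nat.card M = H.index := by
  have hinf : M.relIndex (H ⊔ M) = Nat.card H := by
    rw [relIndex_sup_right, ← inf_relIndex_right, inf_comm,
      disjoint_iff.1 (disjoint_of_coprime_natCard h), relIndex_bot_left]
  have hcard : Nat.card M * Nat.card H = Nat.card (H ⊔ M : Subgroup G) := by
    rw [← hinf, ← relIndex_bot_left, relIndex_mul_relIndex _ _ _ bot_le le_sup_right,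
      relIndex_bot_left]
  have hG := (H ⊔ M).card_mul_index.trans H.card_mul_index.symm
  rw [← hcard, mul_comm (Nat.card M), mul_assoc] at hG
  rw [mul_comm]
  exact Nat.eq_of_mul_eq_mul_left Nat.card_pos hG

theorem normal_zpowers_sq_of_range_le_normalizer (φ : G →* G') (hsq : ∀ c ∈ φ.ker, c ^ 2 = 1)
    (hcomm : ∀ c ∈ φ.ker, Commute c u)
    (hnorm : φ.range ≤ normalizer (zpowers (φ u) : Set G')) : (zpowers (u ^ 2)).Normal := by
  have hconj (g : G) : g * u ^ 2 * g⁻¹ ∈ zpowers (u ^ 2) := by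
    obtain ⟨i, hi⟩ := (mem_normalizer_iff.1 (hnorm ⟨g, rfl⟩) (φ u)).1 (mem_zpowers _)
    have hker : g * u * g⁻¹ * (u ^ i)⁻¹ ∈ φ.ker := by
      rw [MonoidHom.mem_ker, map_mul, map_inv φ (u ^ i), map_zpow, mul_inv_eq_one]
      simpa only [map_mul, map_inv] using hi.symm
    refine ⟨i, ?_⟩
    calc (u ^ 2) ^ i = (g * u * g⁻¹ * (u ^ i)⁻¹) ^ 2 * (u ^ i) ^ 2 := by
          rw [hsq _ hker, one_mul, ← zpow_natCast, ← zpow_natCast, zpow_comm]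
      _ = (g * u * g⁻¹ * (u ^ i)⁻¹ * u ^ i) ^ 2 := (((hcomm _ hker).zpow_right i).mul_pow 2).symm
      _ = g * u ^ 2 * g⁻¹ := by rw [inv_mul_cancel_right, conj_pow]
  refine ⟨fun x hx g => ?_⟩
  obtain ⟨j, rfl⟩ := hx
  rw [← conj_zpow]
  exact zpow_mem (hconj g) j

theorem centralizer_le_comap_normalizer_zpowers (φ : G →* G') (t : G) :
    centralizer {t} ≤ (normalizer (zpowers (φ t) : Set G')).comap φ := by
  rw [← map_le_iff_le_comap]
  calc (centralizer {t}).map φ ≤ centralizer {φ t} := by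
        simpa only [Set.image_singleton] using map_centralizer_le_centralizer_image {t} φ
    _ = centralizer (zpowers (φ t) : Set G') := by rw [zpowers_eq_closure, centralizer_closure]
    _ ≤ normalizer (zpowers (φ t) : Set G') := centralizer_le_normalizer _

theorem ncard_conjugatesOf_eq_index_centralizer (a : G) :
    (conjugatesOf a).ncard = (centralizer {a}).index := by
  have horbit : MulAction.orbit (ConjAct G) a = conjugatesOf a :=
    (ConjAct.orbit_eq_carrier_conjClasses a).trans rfl
  rw [← horbit, ← MulAction.index_stabilizer, ConjAct.stabilizer_eq_centralizer]
  rfl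

theorem exists_conjugatesOf_eq_or_two_mul_ncard_le {A : Set G} (hfin : A.Finite)
    (hA : A.Nonempty) (hconj : ∀ a ∈ A, conjugatesOf a ⊆ A) :
    ∃ a ∈ A, conjugatesOf a = A ∨ 2 * (conjugatesOf a).ncard ≤ A.ncard := by
  obtain ⟨a, ha⟩ := hA
  by_cases hsub : A ⊆ conjugatesOf a
  · exact ⟨a, ha, .inl ((hconj a ha).antisymm hsub)⟩
  obtain ⟨b, hb, hab⟩ := Set.not_subset.1 hsub
  have hdisj : Disjoint (conjugatesOf a) (conjugatesOf b) :=
    Set.disjoint_left.2 fun c (hac : IsConj a c) (hbc : IsConj b c) => hab (hac.trans hbc.symm)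
  have hle : (conjugatesOf a).ncard + (conjugatesOf b).ncard ≤ A.ncard := by
    rw [← Set.ncard_union_eq hdisj (hfin.subset (hconj a ha)) (hfin.subset (hconj b hb))]
    exact Set.ncard_le_ncard (Set.union_subset (hconj a ha) (hconj b hb)) hfin
  rcases le_total (conjugatesOf a).ncard (conjugatesOf b).ncard with h | h
  · exact ⟨a, ha, .inr (by omega)⟩
  · exact ⟨b, hb, .inr (by omega)⟩

end Group

section PrimeDegree

open Equiv Subgroup

variable {G Ω : Type*} [Group G] {σ τ : Perm Ω}

theorem sameCycle_of_orderOf_eq_card (hΩ : (Nat.card Ω).Prime)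
    (hσ : orderOf σ = Nat.card Ω) (a b : Ω) : σ.SameCycle a b := by
  classical
  have := Nat.finite_of_card_ne_zero hΩ.ne_zero
  have := Fintype.ofFinite Ω
  rw [Nat.card_eq_fintype_card] at hΩ hσ
  have hcycle : σ.IsCycle := Perm.isCycle_of_prime_order'' hΩ hσ
  have hsupp : σ.support = Finset.univ := by
    rw [← Finset.card_eq_iff_eq_univ, ← hcycle.orderOf, hσ]
  have hmoves (c : Ω) : σ c ≠ c := Perm.mem_support.1 (hsupp ▸ Finset.mem_univ c)
  exact hcycle.sameCycle (hmoves a) (hmoves b)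

theorem perm_eq_one_of_commute_of_apply_eq (hσ : ∀ a b, σ.SameCycle a b) (hτ : Commute σ τ) {a : Ω}
    (ha : τ a = a) : τ = 1 := by
  ext b
  obtain ⟨i, rfl⟩ := hσ a b
  calc τ ((σ ^ i) a) = (σ ^ i) (τ a) := (Perm.congr_fun (hτ.zpow_left i).eq a).symm
    _ = (σ ^ i) a := by rw [ha]

theorem perm_mem_zpowers_of_commute (hσ : ∀ a b, σ.SameCycle a b) (hτ : Commute σ τ) :
    τ ∈ zpowers σ := by
  cases isEmpty_or_nonempty Ω with
  | inl _ => exact Subsingleton.elim 1 τ ▸ one_mem _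
  | inr h =>
    obtain ⟨a⟩ := h
    obtain ⟨i, hi⟩ := hσ a (τ a)
    have hfix : ((σ ^ i)⁻¹ * τ) a = a := by simp [← hi]
    have hcomm : Commute σ ((σ ^ i)⁻¹ * τ) := ((Commute.refl σ).zpow_right i).inv_right.mul_right hτ
    exact ⟨i, inv_mul_eq_one.1 (perm_eq_one_of_commute_of_apply_eq hσ hcomm hfix)⟩

theorem perm_mem_zpowers_of_mem_normalizer_of_apply_ne (hΩ : (Nat.card Ω).Prime)
    (hσ : orderOf σ = Nat.card Ω) (hτ : τ ∈ normalizer (zpowers σ : Set (Perm Ω)))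
    (hfree : ∀ a, τ a ≠ a) : τ ∈ zpowers σ := by
  have := Nat.finite_of_card_ne_zero hΩ.ne_zero
  by_contra hmem
  let ν := (zpowers σ).normalizerMonoidHom ⟨τ, hτ⟩
  have hν (p : zpowers σ) : (ν p : Perm Ω) = τ * p * τ⁻¹ := rfl
  have hνfree : MonoidHom.FixedPointFree ν := by
    rintro p hp
    by_contra hp1
    have hcomm : Commute (p : Perm Ω) τ := by
      have h := congrArg Subtype.val hp
      rw [hν, mul_inv_eq_iff_eq_mul] at h
      exact h.symm
    have hord : orderOf (p : Perm Ω) = Nat.card Ω :=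
      hσ ▸ orderOf_eq_of_mem_zpowers_of_prime (hσ ▸ hΩ) p.2 fun h => hp1 (Subtype.ext h)
    exact hmem ((zpowers_le.2 p.2)
      (perm_mem_zpowers_of_commute (sameCycle_of_orderOf_eq_card hΩ hord) hcomm))
  obtain ⟨a⟩ := (Nat.card_pos_iff.1 hΩ.pos).1
  obtain ⟨i, hi⟩ := sameCycle_of_orderOf_eq_card hΩ hσ a (τ a)
  -- Every element of `⟨σ⟩τ` is conjugate to `τ`, because `p ↦ p τ p⁻¹ τ⁻¹` is onto `⟨σ⟩`.
  obtain ⟨p, hp⟩ := hνfree.commutatorMap_surjective ⟨(σ ^ i)⁻¹, inv_mem ⟨i, rfl⟩⟩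
  have hconj : (p : Perm Ω) * τ * (p : Perm Ω)⁻¹ = (σ ^ i)⁻¹ * τ := by
    have h : (p : Perm Ω) / (τ * p * τ⁻¹) = (σ ^ i)⁻¹ := congrArg Subtype.val hp
    rw [← h, div_eq_mul_inv]; group
  apply hfree ((p : Perm Ω)⁻¹ a)
  rw [Perm.eq_inv_iff_eq]
  calc (p : Perm Ω) (τ ((p : Perm Ω)⁻¹ a)) = ((σ ^ i)⁻¹ * τ) a := by rw [← hconj]; rfl
    _ = a := by simp [← hi]

theorem eq_one_of_modEq_one_of_dvd_factorial {n q : ℕ} (hq : q.Prime) (hmod : n ≡ 1 [MOD q])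
    (hn : n ≤ q ∨ n ∣ 2 * (q - 1)) (hfact : n ∣ (q - 1).factorial) : n = 1 := by
  have h2q := hq.two_le
  obtain ⟨k, rfl⟩ : ∃ k, n = q * k + 1 :=
    ⟨n / q, by have := Nat.div_add_mod n q; rw [hmod, Nat.mod_eq_of_lt hq.one_lt] at this; omega⟩
  have hle : q * k + 1 ≤ 2 * (q - 1) := by
    rcases hn with hn | hn
    · omega
    · exact Nat.le_of_dvd (by omega) hn
  have hk : k < 2 := by
    by_contra! hk
    have := Nat.mul_le_mul_left q hk
    omega
  interval_cases k
  · rfl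
  · -- Here `n = q + 1` divides `4`, which leaves `q = 3`, but `4 ∤ 2!`.
    exfalso
    have h4 : q + 1 ∣ 4 := by
      have h := hn.resolve_left (by omega)
      have hsum : 2 * (q - 1) + 4 = 2 * (q + 1) := by omega
      rw [mul_one] at h
      exact (Nat.dvd_add_right h).1 (hsum ▸ dvd_mul_left _ _)
    have hq3 : q = 3 := by
      have hle4 := Nat.le_of_dvd (by norm_num) h4
      obtain rfl | rfl : q = 2 ∨ q = 3 := by omega
      · exact absurd h4 (by decide)
      · rfl
    subst hq3
    exact absurd hfact (by decide)

theorem normal_of_card_dvd_factorial_of_index_normalizer {q : ℕ} (hq : q.Prime)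
    (hG : Nat.card G ∣ q.factorial) {P : Subgroup G} (hP : Nat.card P = q)
    (hindex : (normalizer (P : Set G)).index ≤ q ∨
      (normalizer (P : Set G)).index ∣ 2 * (q - 1)) : P.Normal := by
  have := Fact.mk hq
  have := Nat.finite_of_card_ne_zero (ne_zero_of_dvd_ne_zero q.factorial_ne_zero hG)
  have hPindex : P.index ∣ (q - 1).factorial := by
    rw [← P.card_mul_index, hP, ← Nat.mul_factorial_pred hq.ne_zero] at hG
    exact Nat.dvd_of_mul_dvd_mul_left hq.pos hG
  have hqindex : ¬ q ∣ P.index := fun h => by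
    have := hq.dvd_factorial.1 (h.trans hPindex)
    have := hq.pos
    omega
  let S : Sylow q G := (IsPGroup.of_card (n := 1) (by rw [hP, pow_one])).toSylow hqindex
  have hcard : Nat.card (Sylow q G) = (normalizer (P : Set G)).index := S.card_eq_index_normalizer
  have hdvd : (normalizer (P : Set G)).index ∣ (q - 1).factorial :=
    (index_dvd_of_le le_normalizer).trans hPindex
  have hmod := card_sylow_modEq_one q G
  rw [hcard] at hmod
  rw [← normalizer_eq_top_iff, ← index_eq_one]
  exact eq_one_of_modEq_one_of_dvd_factorial hq hmod hindex hdvd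

theorem range_le_normalizer_zpowers_of_index_centralizer (hΩ : (Nat.card Ω).Prime)
    (φ : G →* Perm Ω) {t : G} [(centralizer {t}).FiniteIndex] (ht : orderOf (φ t) = Nat.card Ω)
    (hindex : (centralizer {t}).index ≤ Nat.card Ω ∨
      (centralizer {t}).index = 2 * (Nat.card Ω - 1)) :
    φ.range ≤ normalizer (zpowers (φ t) : Set (Perm Ω)) := by
  have := Nat.finite_of_card_ne_zero hΩ.ne_zero
  have hle : zpowers (φ t) ≤ φ.range := zpowers_le.2 ⟨t, rfl⟩
  let P := (zpowers (φ t)).subgroupOf φ.range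
  have hP : Nat.card P = Nat.card Ω := by
    rw [Nat.card_congr (subgroupOfEquivOfLe hle).toEquiv, Nat.card_zpowers, ht]
  have hcard : Nat.card φ.range ∣ (Nat.card Ω).factorial :=
    Nat.card_perm (α := Ω) ▸ card_subgroup_dvd_card _
  have hdvd : (normalizer (P : Set φ.range)).index ∣ (centralizer {t}).index := by
    rw [← subgroupOf_normalizer_eq hle, subgroupOf, index_comap, range_subtype, ← index_comap]
    exact index_dvd_of_le (centralizer_le_comap_normalizer_zpowers φ t)
  rw [← normal_subgroupOf_iff_le_normalizer hle]
  refine normal_of_card_dvd_factorial_of_index_normalizer hΩ hcard hP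
    (hindex.imp (fun h => ?_) fun h => ?_)
  · exact (Nat.le_of_dvd (Nat.pos_of_ne_zero FiniteIndex.index_ne_zero) hdvd).trans h
  · rwa [h] at hdvd

end PrimeDegree

section CosetAction

open MulAction Subgroup
open scoped commutatorElement

variable {G : Type*} [Group G] {H K : Subgroup G}

theorem toPermHom_apply_mk_eq_iff (y g : G) :
    toPermHom G (G ⧸ K) y (g : G ⧸ K) = g ↔ g⁻¹ * y * g ∈ K := by
  rw [toPermHom_apply, toPerm_apply, Quotient.smul_coe, eq_comm, QuotientGroup.eq, smul_eq_mul,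
    mul_assoc]

theorem mem_normalCore_of_commute {t k : G} (ht : ∀ a b, (toPermHom G (G ⧸ K) t).SameCycle a b)
    (hk : k ∈ K) (hcomm : Commute (toPermHom G (G ⧸ K) t) (toPermHom G (G ⧸ K) k)) :
    k ∈ K.normalCore := by
  rw [normalCore_eq_ker, MonoidHom.mem_ker]
  refine perm_eq_one_of_commute_of_apply_eq ht hcomm (a := ((1 : G) : G ⧸ K)) ?_
  rw [toPermHom_apply_mk_eq_iff]
  simpa using hk

theorem relIndex_normalCore_dvd_factorial [K.FiniteIndex] :
    K.normalCore.relIndex K ∣ (K.index - 1).factorial := by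
  have h : K.normalCore.index ∣ K.index.factorial := by
    rw [normalCore_eq_ker, index_ker, index_eq_card, ← Nat.card_perm]
    exact card_subgroup_dvd_card _
  rw [← relIndex_mul_index K.normalCore_le, mul_comm,
    ← Nat.mul_factorial_pred FiniteIndex.index_ne_zero] at h
  exact Nat.dvd_of_mul_dvd_mul_left (Nat.pos_of_ne_zero FiniteIndex.index_ne_zero) h

theorem not_index_dvd_card_of_sq_eq_one [Finite G] (hK : K.index.Prime) (hK2 : K.index ≠ 2)
    (hsq : ∀ c ∈ K.normalCore, c ^ 2 = 1) : ¬ K.index ∣ Nat.card K := by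
  have := Fact.mk hK
  rw [← relIndex_bot_left, ← relIndex_mul_relIndex _ _ _ bot_le K.normalCore_le,
    relIndex_bot_left, hK.dvd_mul, not_or]
  constructor
  · intro h
    obtain ⟨⟨c, hc⟩, hord⟩ := exists_prime_orderOf_dvd_card' K.index h
    rw [orderOf_mk] at hord
    exact hK2 ((Nat.prime_dvd_prime_iff_eq hK Nat.prime_two).1
      (hord ▸ orderOf_dvd_of_pow_eq_one (hsq c hc)))
  · intro h
    have := hK.dvd_factorial.1 (h.trans relIndex_normalCore_dvd_factorial)
    have := hK.pos
    omega

theorem orderOf_toPermHom_eq_index [Finite G] (hK : K.index.Prime) (hKcard : ¬ K.index ∣ Nat.card K)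
    {t : G} (ht : t ∉ K) (hindex : ¬ K.index ∣ (centralizer {t}).index) :
    orderOf (toPermHom G (G ⧸ K) t) = K.index := by
  have := Fact.mk hK
  have hdvd : K.index ∣ Nat.card (centralizer {t}) := by
    have h : K.index ∣ Nat.card (centralizer {t}) * (centralizer {t}).index :=
      (centralizer {t}).card_mul_index ▸ K.index_dvd_card
    exact (hK.dvd_mul.1 h).resolve_right hindex
  obtain ⟨⟨x, hxt⟩, hx⟩ := exists_prime_orderOf_dvd_card' K.index hdvd
  rw [orderOf_mk] at hx
  have hφx : orderOf (toPermHom G (G ⧸ K) x) = K.index := by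
    refine ((Nat.dvd_prime hK).1 (hx ▸ orderOf_map_dvd _ x)).resolve_left fun h => hKcard ?_
    have hxK : x ∈ K := K.normalCore_le (by
      rw [normalCore_eq_ker, MonoidHom.mem_ker]; exact orderOf_eq_one_iff.1 h)
    rw [← hx, ← orderOf_mk x hxK]
    exact orderOf_dvd_natCard _
  have hcomm : Commute (toPermHom G (G ⧸ K) x) (toPermHom G (G ⧸ K) t) :=
    Commute.map (mem_centralizer_singleton_iff.1 hxt) _
  have hmem := perm_mem_zpowers_of_commute (sameCycle_of_orderOf_eq_card hK hφx) hcomm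
  have hne : toPermHom G (G ⧸ K) t ≠ 1 := fun h =>
    ht (K.normalCore_le (by rwa [normalCore_eq_ker, MonoidHom.mem_ker]))
  rw [← hφx]
  exact orderOf_eq_of_mem_zpowers_of_prime (hφx.symm ▸ hK) hmem hne

theorem commutator_mem_centralizer_normalCore {z : G} (hz : K ≤ centralizer {z}) (t : G) :
    ⁅z, t⁆ ∈ centralizer (K.normalCore : Set G) := by
  have hzC : z ∈ centralizer (K.normalCore : Set G) := fun c hc =>
    mem_centralizer_singleton_iff.1 (hz (K.normalCore_le hc))
  have h : ⁅z, t⁆ = z * (t * z⁻¹ * t⁻¹) := by rw [commutatorElement_def]; group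
  exact h ▸ mul_mem hzC (normal_centralizer.conj_mem _ (inv_mem hzC) t)

theorem index_sup_zpowers_sq [Finite G] {u : G} [(zpowers (u ^ 2)).Normal] (hHK : H ≤ K)
    (hrel : H.relIndex K = 2) (hK : K.index.Prime) (hK2 : K.index ≠ 2)
    (hsq : ∀ c ∈ K.normalCore, c ^ 2 = 1) (hu : u ∉ K.normalCore)
    (hpow : u ^ K.index ∈ K.normalCore) : (H ⊔ zpowers (u ^ 2)).index = 2 := by
  have hM : Nat.card (zpowers (u ^ 2)) = K.index := by
    rw [Nat.card_zpowers, orderOf_sq_eq_prime_of_pow_mem hK hK2 hsq hu hpow]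
  have hcop : (Nat.card H).Coprime (Nat.card (zpowers (u ^ 2))) := by
    rw [hM, Nat.coprime_comm, hK.coprime_iff_not_dvd]
    exact fun h => not_index_dvd_card_of_sq_eq_one hK hK2 hsq (h.trans (card_dvd_of_le hHK))
  have hindex := index_sup_mul_card_of_coprime hcop
  rw [hM, ← relIndex_mul_index hHK, hrel] at hindex
  exact Nat.eq_of_mul_eq_mul_right hK.pos hindex

end CosetAction

namespace IsFaithfulFolder

open Subgroup

variable {G : Type*} [Group G] {H K : Subgroup G}

theorem finite (hH : IsFaithfulFolder H) [H.FiniteIndex] : Finite G := by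
  have hbot : H.normalCore = ⊥ := (eq_bot_iff_forall _).2 fun x hx => hH x hx
  apply Nat.finite_of_card_ne_zero
  rw [← index_bot, ← hbot]
  exact FiniteIndex.index_ne_zero

theorem sq_eq_one_of_mem_normalCore (hH : IsFaithfulFolder H) (hHK : H.relIndex K = 2) {c : G}
    (hc : c ∈ K.normalCore) : c ^ 2 = 1 := by
  refine hH _ fun g => ?_
  rw [← conj_pow, sq, mul_mem_iff_of_relIndex_two hHK (hc g) (hc g)]

end IsFaithfulFolder

namespace IsRCC

open MulAction Subgroup
open scoped commutatorElement

variable {G : Type*} [Group G] {K : Subgroup G} {T : Set G} {z : G}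

theorem conj_mem (hT : IsRCC T) {t : G} (ht : t ∈ T) (g : G) : g * t * g⁻¹ ∈ T := by
  simpa using hT t ht g⁻¹

theorem conjugatesOf_subset (hT : IsRCC T) {t : G} (ht : t ∈ T) : conjugatesOf t ⊆ T := by
  intro s hs
  obtain ⟨g, rfl⟩ := isConj_iff.1 hs
  exact hT.conj_mem ht g

theorem conj_eq_self_of_conj_mem (hT : IsRCC T) (hTK : T ∩ K = {1, z}) (hz : z ≠ 1) {g : G}
    (hg : g * z * g⁻¹ ∈ K) : g * z * g⁻¹ = z := by
  have hzT : z ∈ T ∩ K := hTK ▸ .inr rfl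
  have hmem : g * z * g⁻¹ ∈ T ∩ K := ⟨hT.conj_mem hzT.1 g, hg⟩
  rw [hTK] at hmem
  exact hmem.resolve_left fun h => hz (conj_eq_one_iff.1 h)

theorem le_centralizer (hT : IsRCC T) (hTK : T ∩ K = {1, z}) (hz : z ≠ 1) :
    K ≤ centralizer {z} := by
  have hzK : z ∈ K := (hTK ▸ .inr rfl : z ∈ T ∩ K).2
  intro k hk
  rw [mem_centralizer_singleton_iff]
  exact mul_inv_eq_iff_eq_mul.1
    (hT.conj_eq_self_of_conj_mem hTK hz (mul_mem (mul_mem hk hzK) (inv_mem hk)))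

theorem mem_center_of_mem_normalCore (hT : IsRCC T) (hTK : T ∩ K = {1, z}) (hz : z ≠ 1)
    (hzcore : z ∈ K.normalCore) : z ∈ center G :=
  mem_center_iff.2 fun g =>
    mul_inv_eq_iff_eq_mul.1 (hT.conj_eq_self_of_conj_mem hTK hz (hzcore g))

theorem conjugatesOf_subset_sdiff (hT : IsRCC T) {t : G} (ht : t ∈ T \ insert 1 (conjugatesOf z)) :
    conjugatesOf t ⊆ T \ insert 1 (conjugatesOf z) := by
  intro s hs
  refine ⟨hT.conjugatesOf_subset ht.1 hs, ?_⟩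
  rintro (rfl | hzs)
  · exact ht.2 (.inl (isConj_one_left.1 hs))
  · exact ht.2 (.inr (IsConj.trans hzs (IsConj.symm hs)))

theorem ncard_sdiff_insert_conjugatesOf (hT : IsRCC T) (hfin : T.Finite) (h1 : 1 ∈ T)
    (hz : z ∈ T) (hz1 : z ≠ 1) :
    (T \ insert 1 (conjugatesOf z)).ncard = T.ncard - ((centralizer {z}).index + 1) := by
  have hsub : conjugatesOf z ⊆ T := hT.conjugatesOf_subset hz
  have h1z : (1 : G) ∉ conjugatesOf z := fun h => hz1 (isConj_one_left.1 h)
  rw [Set.ncard_sdiff (Set.insert_subset h1 hsub) (hfin.subset (Set.insert_subset h1 hsub)),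
    Set.ncard_insert_of_notMem h1z (hfin.subset hsub), ncard_conjugatesOf_eq_index_centralizer]

theorem exists_notMem_index_centralizer (hT : IsRCC T) (hTK : T ∩ K = {1, z}) (hz : z ≠ 1)
    (hK : K.index.Prime) (hcard : T.ncard = 2 * K.index) :
    ∃ t ∉ K, (centralizer {t}).index < K.index ∨
      (centralizer {t}).index = 2 * (K.index - 1) := by
  have hq := hK.two_le
  have hfin : T.Finite := Set.finite_of_ncard_pos (by omega)
  have h1T : (1 : G) ∈ T := (hTK ▸ .inl rfl : (1 : G) ∈ T ∩ K).1
  have hzT : z ∈ T := (hTK ▸ .inr rfl : z ∈ T ∩ K).1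
  have hA := hT.ncard_sdiff_insert_conjugatesOf hfin h1T hzT hz
  have hAcard : (T \ insert 1 (conjugatesOf z)).ncard = K.index - 1 ∨
      (T \ insert 1 (conjugatesOf z)).ncard = 2 * (K.index - 1) := by
    rcases (Nat.dvd_prime hK).1 (index_dvd_of_le (hT.le_centralizer hTK hz)) with h | h <;> omega
  obtain ⟨t, ht, hclass⟩ := exists_conjugatesOf_eq_or_two_mul_ncard_le
    (hfin.subset Set.sdiff_subset) (Set.nonempty_of_ncard_ne_zero (by omega))
    fun _ => hT.conjugatesOf_subset_sdiff (z := z)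
  have htK : t ∉ K := by
    intro htK
    have hmem : t ∈ T ∩ K := ⟨ht.1, htK⟩
    rw [hTK] at hmem
    rcases hmem with rfl | rfl
    · exact ht.2 (.inl rfl)
    · exact ht.2 (.inr mem_conjugatesOf_self)
  refine ⟨t, htK, ?_⟩
  rw [← ncard_conjugatesOf_eq_index_centralizer]
  rcases hclass with h | h
  · rw [h]; omega
  · omega

theorem exists_range_le_normalizer_zpowers [Finite G] (hT : IsRCC T) (hTK : T ∩ K = {1, z})
    (hz : z ≠ 1) (hK : K.index.Prime) (hK2 : K.index ≠ 2) (hcard : T.ncard = 2 * K.index)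
    (hKcard : ¬ K.index ∣ Nat.card K) :
    ∃ t, orderOf (toPermHom G (G ⧸ K) t) = K.index ∧
      (toPermHom G (G ⧸ K)).range ≤
        normalizer (zpowers (toPermHom G (G ⧸ K) t) : Set (Equiv.Perm (G ⧸ K))) := by
  obtain ⟨t, htK, hindex⟩ := hT.exists_notMem_index_centralizer hTK hz hK hcard
  have hndvd : ¬ K.index ∣ (centralizer {t}).index := by
    have hq := hK.two_le
    rcases hindex with h | h
    · exact Nat.not_dvd_of_pos_of_lt (Nat.pos_of_ne_zero index_ne_zero_of_finite) h
    · rw [h, hK.dvd_mul, Nat.prime_dvd_prime_iff_eq hK Nat.prime_two, not_or]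
      exact ⟨hK2, Nat.not_dvd_of_pos_of_lt (by omega) (by omega)⟩
  have hord := orderOf_toPermHom_eq_index hK hKcard htK hndvd
  exact ⟨t, hord, range_le_normalizer_zpowers_of_index_centralizer hK _ hord
    (hindex.imp_left le_of_lt)⟩

theorem normal_of_mem_center (hT : IsRCC T) (hgen : closure T = ⊤)
    (hTK : T ∩ K = {1, z}) (hz : z ∈ center G) (hK : K.index.Prime) {t : G}
    (ht : orderOf (toPermHom G (G ⧸ K) t) = K.index)
    (hnorm : (toPermHom G (G ⧸ K)).range ≤
      normalizer (zpowers (toPermHom G (G ⧸ K) t) : Set (Equiv.Perm (G ⧸ K)))) :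
    K.Normal := by
  have hcenter : ∀ s ∈ T, s ∈ K → s ∈ center G := by
    intro s hs hsK
    have hmem : s ∈ T ∩ K := ⟨hs, hsK⟩
    rw [hTK] at hmem
    rcases hmem with rfl | rfl
    · exact one_mem _
    · exact hz
  have hcore : ∀ s ∈ T, ∀ g : G, g⁻¹ * s * g ∈ K → s ∈ K.normalCore := by
    intro s hs g hg
    have hconj : g⁻¹ * s * g ∈ K.normalCore := fun b => by
      rwa [mul_inv_eq_iff_eq_mul.2 (mem_center_iff.1 (hcenter _ (hT s hs g) hg) b)]
    simpa [mul_assoc] using K.normalCore_normal.conj_mem _ hconj g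
  have hTt : ∀ s ∈ T, toPermHom G (G ⧸ K) s ∈ zpowers (toPermHom G (G ⧸ K) t) := by
    intro s hs
    by_cases hsK : s ∈ K.normalCore
    · rw [normalCore_eq_ker, MonoidHom.mem_ker] at hsK
      exact hsK ▸ one_mem _
    · refine perm_mem_zpowers_of_mem_normalizer_of_apply_ne hK ht (hnorm ⟨s, rfl⟩) fun a => ?_
      induction a using QuotientGroup.induction_on with
      | H g => exact fun h => hsK (hcore s hs g ((toPermHom_apply_mk_eq_iff s g).1 h))
  have hrange (g : G) : toPermHom G (G ⧸ K) g ∈ zpowers (toPermHom G (G ⧸ K) t) := by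
    have hle := (closure_le ((zpowers (toPermHom G (G ⧸ K) t)).comap _)).2 hTt
    exact (hgen ▸ hle) (mem_top g)
  have hKcore : K.normalCore = K := le_antisymm K.normalCore_le fun k hk =>
    mem_normalCore_of_commute (sameCycle_of_orderOf_eq_card hK ht) hk (by
      obtain ⟨i, hi⟩ := hrange k
      exact hi ▸ (Commute.refl _).zpow_right i)
  exact hKcore ▸ K.normalCore_normal

theorem exists_normal_zpowers_sq_of_notMem_center {t : G} (hT : IsRCC T)
    (hTK : T ∩ K = {1, z}) (hz : z ≠ 1) (hzc : z ∉ center G) (hK : K.index.Prime)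
    (hsq : ∀ c ∈ K.normalCore, c ^ 2 = 1) (ht : orderOf (toPermHom G (G ⧸ K) t) = K.index)
    (hnorm : (toPermHom G (G ⧸ K)).range ≤
      normalizer (zpowers (toPermHom G (G ⧸ K) t) : Set (Equiv.Perm (G ⧸ K)))) :
    ∃ u ∉ K.normalCore, u ^ K.index ∈ K.normalCore ∧ (zpowers (u ^ 2)).Normal := by
  have hzK : z ∈ K := (hTK ▸ .inr rfl : z ∈ T ∩ K).2
  have hu : ⁅z, t⁆ ∉ K.normalCore := by
    intro hu
    rw [normalCore_eq_ker, MonoidHom.mem_ker, map_commutatorElement,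
      commutatorElement_eq_one_iff_commute] at hu
    exact hzc (hT.mem_center_of_mem_normalCore hTK hz
      (mem_normalCore_of_commute (sameCycle_of_orderOf_eq_card hK ht) hzK hu.symm))
  have hmem : toPermHom G (G ⧸ K) ⁅z, t⁆ ∈ zpowers (toPermHom G (G ⧸ K) t) := by
    rw [map_commutatorElement, commutatorElement_def]
    exact mul_mem ((mem_normalizer_iff.1 (hnorm ⟨z, rfl⟩) _).1 (mem_zpowers _))
      (inv_mem (mem_zpowers _))
  have hpow : ⁅z, t⁆ ^ K.index ∈ K.normalCore := by
    rw [normalCore_eq_ker, MonoidHom.mem_ker, map_pow]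
    exact orderOf_dvd_iff_pow_eq_one.1 (ht ▸ orderOf_dvd_of_mem_zpowers hmem)
  have hzpowers : zpowers (toPermHom G (G ⧸ K) ⁅z, t⁆) = zpowers (toPermHom G (G ⧸ K) t) :=
    zpowers_eq_of_mem_zpowers_of_prime (ht ▸ hK) hmem (by
      rwa [normalCore_eq_ker, MonoidHom.mem_ker] at hu)
  refine ⟨⁅z, t⁆, hu, hpow, normal_zpowers_sq_of_range_le_normalizer (toPermHom G (G ⧸ K)) ?_ ?_
    (hzpowers ▸ hnorm)⟩
  · rwa [← normalCore_eq_ker]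
  · rw [← normalCore_eq_ker]
    exact fun c hc => mem_centralizer_iff.1
      (commutator_mem_centralizer_normalCore (hT.le_centralizer hTK hz) t) c hc

end IsRCC

namespace IsLoopFolder

open Subgroup
open scoped commutatorElement

variable {G : Type*} [Group G] {H K : Subgroup G} {T : Set G}

theorem isComplement (hT : IsLoopFolder H T) : IsComplement (H : Set G) T := by
  refine isComplement_iff_existsUnique_mul_inv_mem.2 fun x => ?_
  obtain ⟨t, ⟨ht, hxt⟩, huniq⟩ := hT.2 1 x
  simp only [one_mul, inv_one, mul_one] at hxt huniq
  exact ⟨⟨t, ht⟩, hxt, fun s hs => Subtype.ext (huniq s ⟨s.2, hs⟩)⟩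

theorem eq_of_mul_inv_mem (hT : IsLoopFolder H T) {s t : G} (hs : s ∈ T) (ht : t ∈ T)
    (h : s * t⁻¹ ∈ H) : s = t :=
  (hT.2 1 s).unique ⟨hs, by simp⟩ ⟨ht, by simpa using h⟩

theorem exists_inter_eq_pair (hT : IsLoopFolder H T) (hHK : H ≤ K) (hrel : H.relIndex K = 2) :
    ∃ z ≠ 1, T ∩ K = {1, z} := by
  obtain ⟨x, hxK, hxH⟩ : ∃ x ∈ K, x ∉ H :=
    SetLike.not_le_iff_exists.1 fun h => absurd (relIndex_eq_one.2 h) (by omega)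
  obtain ⟨z, ⟨hzT, hxz⟩, -⟩ := hT.2 1 x
  simp only [one_mul, inv_one, mul_one] at hxz
  have hzK : z ∈ K := inv_mem_iff.1 ((mul_mem_cancel_left hxK).1 (hHK hxz))
  have hzH : z ∉ H := fun h => hxH ((mul_mem_cancel_right (inv_mem h)).1 hxz)
  refine ⟨z, fun h => hzH (h ▸ one_mem H), Set.Subset.antisymm ?_ ?_⟩
  · rintro s ⟨hsT, hsK⟩
    by_cases hsH : s ∈ H
    · exact .inl (hT.eq_of_mul_inv_mem hsT hT.1 (by simpa using hsH))
    · refine .inr (hT.eq_of_mul_inv_mem hsT hzT ?_)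
      rw [mul_mem_iff_of_relIndex_two hrel hsK (inv_mem hzK), inv_mem_iff]
      exact iff_of_false hsH hzH
  · rintro s (rfl | rfl)
    · exact ⟨hT.1, one_mem K⟩
    · exact ⟨hzT, hzK⟩

theorem eq_or_eq_or_eq_of_mul_inv_mem (hT : IsLoopFolder H T) (hrel : H.relIndex K = 2) {a b c : G}
    (ha : a ∈ T) (hb : b ∈ T) (hc : c ∈ T) (hab : a * b⁻¹ ∈ K) (hbc : b * c⁻¹ ∈ K) :
    a = b ∨ b = c ∨ a = c := by
  by_cases habH : a * b⁻¹ ∈ H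
  · exact .inl (hT.eq_of_mul_inv_mem ha hb habH)
  by_cases hbcH : b * c⁻¹ ∈ H
  · exact .inr (.inl (hT.eq_of_mul_inv_mem hb hc hbcH))
  have hac : a * c⁻¹ = a * b⁻¹ * (b * c⁻¹) := by group
  refine .inr (.inr (hT.eq_of_mul_inv_mem ha hc ?_))
  rw [hac, mul_mem_iff_of_relIndex_two hrel hab hbc]
  exact iff_of_false habH hbcH

theorem sq_mem_center (hT : IsLoopFolder H T) (hRCC : IsRCC T) (hgen : closure T = ⊤)
    (hrel : H.relIndex K = 2) (hK : _root_.commutator G ≤ K) (g : G) : g ^ 2 ∈ center G := by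
  have hcoset (s : G) : s * (g * s * g⁻¹)⁻¹ ∈ K := by
    have h : s * (g * s * g⁻¹)⁻¹ = ⁅s, g⁆ := by rw [commutatorElement_def]; group
    exact h ▸ hK (commutator_mem_commutator (mem_top s) (mem_top g))
  have hcomm : ∀ s ∈ T, Commute s (g ^ 2) := by
    intro s hs
    have hs' := hRCC.conj_mem hs g
    rcases hT.eq_or_eq_or_eq_of_mul_inv_mem hrel hs hs' (hRCC.conj_mem hs' g)
      (hcoset s) (hcoset _) with h | h | h
    · exact Commute.pow_right (eq_mul_inv_iff_mul_eq.1 h) 2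
    · exact Commute.pow_right (eq_mul_inv_iff_mul_eq.1 (conj_injective h)) 2
    · calc s * g ^ 2 = g * (g * s * g⁻¹) * g⁻¹ * g ^ 2 := by rw [← h]
        _ = g ^ 2 * s := by simp only [sq]; group
  rw [← centralizer_univ, ← coe_top, ← hgen, centralizer_closure]
  exact mem_centralizer_iff.2 hcomm

theorem exists_normal_zpowers_sq_of_normal (hT : IsLoopFolder H T) (hRCC : IsRCC T)
    (hgen : closure T = ⊤) (hrel : H.relIndex K = 2) (hK : K.index.Prime) [K.Normal] :
    ∃ u ∉ K, u ^ K.index ∈ K ∧ (zpowers (u ^ 2)).Normal := by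
  have := Fact.mk hK
  have hcyclic : IsCyclic (G ⧸ K) := isCyclic_of_prime_card (p := K.index) rfl
  have hcomm : _root_.commutator G ≤ K :=
    Normal.quotient_commutative_iff_commutator_le.1 hcyclic.isMulCommutative
  obtain ⟨u, -, hu⟩ : ∃ u ∈ (⊤ : Subgroup G), u ∉ K :=
    SetLike.not_le_iff_exists.1 fun h => hK.ne_one (index_eq_one.2 (top_le_iff.1 h))
  have hcenter : zpowers (u ^ 2) ≤ center G :=
    zpowers_le.2 (hT.sq_mem_center hRCC hgen hrel hcomm u)
  refine ⟨u, hu, pow_index_mem K u, ⟨fun x hx g => ?_⟩⟩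
  rwa [mem_center_iff.1 (hcenter hx) g, mul_inv_cancel_right]

theorem exists_normal_zpowers_sq [Finite G] (hT : IsLoopFolder H T) (hRCC : IsRCC T)
    (hgen : closure T = ⊤) (hHK : H ≤ K) (hrel : H.relIndex K = 2) (hK : K.index.Prime)
    (hK2 : K.index ≠ 2) (hsq : ∀ c ∈ K.normalCore, c ^ 2 = 1) :
    ∃ u ∉ K.normalCore, u ^ K.index ∈ K.normalCore ∧ (zpowers (u ^ 2)).Normal := by
  have hcard : T.ncard = 2 * K.index := by
    rw [hT.isComplement.ncard_right, ← relIndex_mul_index hHK, hrel]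
  obtain ⟨z, hz, hTK⟩ := hT.exists_inter_eq_pair hHK hrel
  obtain ⟨t, ht, hnorm⟩ := hRCC.exists_range_le_normalizer_zpowers hTK hz hK hK2 hcard
    (not_index_dvd_card_of_sq_eq_one hK hK2 hsq)
  by_cases hzc : z ∈ center G
  · have hnormal := hRCC.normal_of_mem_center hgen hTK hzc hK ht hnorm
    rw [normalCore_eq_self]
    exact hT.exists_normal_zpowers_sq_of_normal hRCC hgen hrel hK
  · exact hRCC.exists_normal_zpowers_sq_of_notMem_center hTK hz hzc hK hsq ht hnorm

end IsLoopFolder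

theorem stmt_19_general {G : Type*} [Group G] {H K : Subgroup G} {T : Set G}
    (hLF : IsLoopFolder H T) (hRCC : IsRCC T) (hFaith : IsFaithfulFolder H)
    (hgen : Subgroup.closure T = ⊤) (hHK : H ≤ K) (hrel : H.relIndex K = 2)
    (hK : K.index.Prime) : ∃ M : Subgroup G, M.Normal ∧ (H ⊔ M).index = 2 := by
  by_cases hK2 : K.index = 2
  · exact ⟨K, Subgroup.normal_of_index_eq_two hK2, by rwa [sup_eq_right.2 hHK]⟩
  have hindex : H.index = 2 * K.index := by rw [← Subgroup.relIndex_mul_index hHK, hrel]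
  have : H.FiniteIndex := ⟨by rw [hindex]; exact mul_ne_zero two_ne_zero hK.ne_zero⟩
  have : Finite G := hFaith.finite
  have hsq : ∀ c ∈ K.normalCore, c ^ 2 = 1 := fun c => hFaith.sq_eq_one_of_mem_normalCore hrel
  obtain ⟨u, hu, hpow, hnormal⟩ := hLF.exists_normal_zpowers_sq hRCC hgen hHK hrel hK hK2 hsq
  exact ⟨_, hnormal, index_sup_zpowers_sq hHK hrel hK hK2 hsq hu hpow⟩

/-- The case `p = 2`: if `|K : H| = 2`, `|G : K| = q` and `N_G(K) = K`, then there is a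
normal subgroup `M` of `G` with `|G : HM| = 2`. -/
theorem stmt_19 {G : Type*} [Group G] [Finite G] (q : ℕ) (hq : q.Prime) (hodd : Odd q)
    (H K : Subgroup G) (T : Set G)
    (hLF : IsLoopFolder H T) (hRCC : IsRCC T) (hFaith : IsFaithfulFolder H)
    (hord : Nat.card T = 2 * q) (hgen : Subgroup.closure T = ⊤)
    (hHK : H ≤ K) (hKH : H.relIndex K = 2) (hGK : K.index = q)
    (hself : Subgroup.normalizer (K : Set G) = K) :
    ∃ M : Subgroup G, M.Normal ∧ (H ⊔ M).index = 2 := by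
  exact stmt_19_general hLF hRCC hFaith hgen hHK hKH (hGK ▸ hq)
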